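/- arXiv:1603.09159 — 6 statements merged into one kernel-verified Lean document; each statement's English description precedes it below -/
import Mathlib

section
/- Let (X,d) be a complete metric space, R a binary relation on X and f a self-mapping on X. Suppose: (i) R is f-closed; (ii) either f is continuous or R is d-self-closed; (iii) there exists x ∈ X with (x, f x) ∈ R; (iv) there exists α ∈ [0,1) such that d(f x, f y) ≤ α·d(x,y) for all x,y ∈ X with (x,y) ∈ R. Then f has a fixed point. Moreover, if additionally (v) for every pair x,y ∈ X there is a path in R^s from x to y, then f has a unique fixed point. -/
open Filter

/-!
The orbit of a point `x₀` with `R x₀ (f x₀)` is `R`-preserving, so the contraction estimate applies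
along it and it converges as in Banach's theorem; either alternative on `f` or `R` makes the limit a
fixed point. For uniqueness, being forward asymptotic (`f^[n] x` and `f^[n] y` become arbitrarily
close) is an equivalence relation containing `R`, hence it relates any two points joined by a path
in `R^s`, and asymptotic fixed points coincide.
-/

open Function Relation
open scoped NNReal Topology Uniformity

/-- `f` is Lipschitz along `R`: it satisfies the Lipschitz bound with constant `K` on pairs related
by `R`. For `K < 1` these are the `R`-restricted contractions. -/
def RelLipschitzWith {X : Type*} [PseudoMetricSpace X] (K : ℝ≥0) (R : X → X → Prop)
    (f : X → X) : Prop :=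
  ∀ x y, R x y → dist (f x) (f y) ≤ K * dist x y

/-- `d`-self-closedness of a relation: the limit of a convergent `R`-preserving sequence is
comparable with every term of some subsequence. Only the topology induced by `d` matters. -/
def DSelfClosed {X : Type*} [TopologicalSpace X] (R : X → X → Prop) : Prop :=
  ∀ (s : ℕ → X) (x : X), (∀ n, R (s n) (s (n + 1))) → Tendsto s atTop (𝓝 x) →
    ∃ φ : ℕ → ℕ, StrictMono φ ∧ ∀ k, SymmGen R (s (φ k)) x

/-- `x` and `y` form a (forward) asymptotic pair of `f`: each entourage contains the pairs
`(f^[n] x, f^[n] y)` for all large `n`. In a metric space this says that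
`dist (f^[n] x) (f^[n] y)` tends to zero. -/
def IsAsymptoticPair {X : Type*} [UniformSpace X] (f : X → X) (x y : X) : Prop :=
  Tendsto (fun n ↦ (f^[n] x, f^[n] y)) atTop (𝓤 X)

theorem rel_iterate {X : Type*} {R : X → X → Prop} {f : X → X}
    (hR : ∀ x y, R x y → R (f x) (f y)) {x y : X} (hxy : R x y) (n : ℕ) :
    R (f^[n] x) (f^[n] y) := by
  induction n generalizing x y with
  | zero => exact hxy
  | succ _ ih => exact ih (hR x y hxy)

theorem reflTransGen_of_forall_lt {X : Type*} {r : X → X → Prop} {z : ℕ → X} {k : ℕ}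
    (hz : ∀ i < k, r (z i) (z (i + 1))) : ReflTransGen r (z 0) (z k) :=
  (reflTransGen_of_succ_of_le (fun i j ↦ r (z i) (z j)) (fun i hi ↦ hz i hi.2) k.zero_le).lift z
    fun _ _ ↦ id

theorem isFixedPt_of_tendsto_iterate_comp {X ι : Type*} [TopologicalSpace X] [T2Space X]
    {f : X → X} {x₀ x : X} {l : Filter ι} [l.NeBot] {φ : ι → ℕ}
    (hx : Tendsto (fun n ↦ f^[n] x₀) atTop (𝓝 x)) (hφ : Tendsto φ l atTop)
    (hf : Tendsto (fun i ↦ f (f^[φ i] x₀)) l (𝓝 (f x))) : IsFixedPt f x := by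
  have hsucc : Tendsto (fun n ↦ f (f^[n] x₀)) atTop (𝓝 x) := by
    simpa only [iterate_succ_apply'] using (tendsto_add_atTop_iff_nat 1).2 hx
  exact tendsto_nhds_unique hf (hsucc.comp hφ)

namespace IsAsymptoticPair

variable {X : Type*} [UniformSpace X] {f : X → X}

theorem equivalence (f : X → X) : Equivalence (IsAsymptoticPair f) where
  refl x := tendsto_diag_uniformity (fun n ↦ f^[n] x) atTop
  symm h := h.uniformity_symm
  trans hxy hyz := hxy.uniformity_trans hyz

theorem of_eqvGen {R : X → X → Prop} (hR : ∀ x y, R x y → IsAsymptoticPair f x y) {x y : X}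
    (hxy : EqvGen R x y) : IsAsymptoticPair f x y :=
  (equivalence f).eqvGen_iff.1 (hxy.mono hR)

theorem eq_of_isFixedPt [T0Space X] {x y : X} (h : IsAsymptoticPair f x y)
    (hx : IsFixedPt f x) (hy : IsFixedPt f y) : x = y := by
  refine eq_of_uniformity fun {V} hV ↦ ?_
  obtain ⟨n, hn⟩ := (h.eventually hV).exists
  rwa [iterate_fixed hx, iterate_fixed hy] at hn

end IsAsymptoticPair

namespace RelLipschitzWith

section PseudoMetricSpace

variable {X : Type*} [PseudoMetricSpace X] {K : ℝ≥0} {R : X → X → Prop} {f : X → X}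

theorem symmGen (hf : RelLipschitzWith K R f) : RelLipschitzWith K (SymmGen R) f := by
  rintro x y (hxy | hyx)
  · exact hf x y hxy
  · simpa only [dist_comm] using hf y x hyx

theorem iterate (hf : RelLipschitzWith K R f) (hR : ∀ x y, R x y → R (f x) (f y)) (n : ℕ) :
    RelLipschitzWith (K ^ n) R f^[n] := by
  intro x y hxy
  induction n with
  | zero => simp
  | succ n ih =>
    calc dist (f^[n + 1] x) (f^[n + 1] y)
        = dist (f (f^[n] x)) (f (f^[n] y)) := by simp only [iterate_succ_apply']
      _ ≤ K * dist (f^[n] x) (f^[n] y) := hf _ _ (rel_iterate hR hxy n)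
      _ ≤ K * (↑(K ^ n) * dist x y) := by gcongr
      _ = ↑(K ^ (n + 1)) * dist x y := by push_cast; ring

theorem tendsto {ι : Type*} {l : Filter ι} {u : ι → X} {x : X} (hf : RelLipschitzWith K R f)
    (hu : Tendsto u l (𝓝 x)) (hR : ∀ᶠ i in l, R (u i) x) :
    Tendsto (fun i ↦ f (u i)) l (𝓝 (f x)) := by
  rw [tendsto_iff_dist_tendsto_zero] at hu ⊢
  have hbound : Tendsto (fun i ↦ K * dist (u i) x) l (𝓝 0) := by
    simpa only [mul_zero] using hu.const_mul (K : ℝ)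
  exact squeeze_zero' (.of_forall fun _ ↦ dist_nonneg) (hR.mono fun i ↦ hf (u i) x) hbound

theorem cauchySeq_iterate (hf : RelLipschitzWith K R f) (hK : K < 1)
    (hR : ∀ x y, R x y → R (f x) (f y)) {x₀ : X} (hx₀ : R x₀ (f x₀)) :
    CauchySeq fun n ↦ f^[n] x₀ := by
  refine cauchySeq_of_le_geometric K (dist x₀ (f x₀)) hK fun n ↦ ?_
  rw [mul_comm, iterate_succ_apply]
  exact_mod_cast hf.iterate hR n x₀ (f x₀) hx₀

theorem isAsymptoticPair (hf : RelLipschitzWith K R f) (hK : K < 1)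
    (hR : ∀ x y, R x y → R (f x) (f y)) {x y : X} (hxy : R x y) : IsAsymptoticPair f x y := by
  have hbound : Tendsto (fun n : ℕ ↦ (K : ℝ) ^ n * dist x y) atTop (𝓝 0) := by
    simpa only [zero_mul] using
      (tendsto_pow_atTop_nhds_zero_of_lt_one K.coe_nonneg hK).mul_const (dist x y)
  refine tendsto_uniformity_iff_dist_tendsto_zero.2 ?_
  exact squeeze_zero (fun _ ↦ dist_nonneg) (fun n ↦ mod_cast hf.iterate hR n x y hxy) hbound

end PseudoMetricSpace

section MetricSpace

variable {X : Type*} [MetricSpace X] {K : ℝ≥0} {R : X → X → Prop} {f : X → X}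

theorem isFixedPt_of_tendsto_iterate (hf : RelLipschitzWith K R f) (hself : DSelfClosed R)
    {x₀ x : X} (hpres : ∀ n, R (f^[n] x₀) (f^[n + 1] x₀))
    (hx : Tendsto (fun n ↦ f^[n] x₀) atTop (𝓝 x)) : IsFixedPt f x := by
  obtain ⟨φ, hφ, hcomp⟩ := hself _ x hpres hx
  exact isFixedPt_of_tendsto_iterate_comp hx hφ.tendsto_atTop
    (hf.symmGen.tendsto (hx.comp hφ.tendsto_atTop) (.of_forall hcomp))

theorem exists_isFixedPt [CompleteSpace X] (hf : RelLipschitzWith K R f) (hK : K < 1)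
    (hR : ∀ x y, R x y → R (f x) (f y)) (hcont : Continuous f ∨ DSelfClosed R) {x₀ : X}
    (hx₀ : R x₀ (f x₀)) : ∃ x, IsFixedPt f x := by
  obtain ⟨x, hx⟩ := cauchySeq_tendsto_of_complete (hf.cauchySeq_iterate hK hR hx₀)
  refine ⟨x, ?_⟩
  rcases hcont with hcont | hself
  · exact _root_.isFixedPt_of_tendsto_iterate hx hcont.continuousAt
  · exact hf.isFixedPt_of_tendsto_iterate hself (rel_iterate hR hx₀) hx

theorem eq_of_isFixedPt (hf : RelLipschitzWith K R f) (hK : K < 1)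
    (hR : ∀ x y, R x y → R (f x) (f y)) {x y : X} (hxy : EqvGen R x y)
    (hx : IsFixedPt f x) (hy : IsFixedPt f y) : x = y :=
  (IsAsymptoticPair.of_eqvGen (fun _ _ ↦ hf.isAsymptoticPair hK hR) hxy).eq_of_isFixedPt hx hy

end MetricSpace

end RelLipschitzWith

/-- Theorem 1, relation-theoretic Banach contraction principle:
In a complete metric space with a binary relation `R`, if `R` is `f`-closed,
`f` is continuous or `R` is `d`-self-closed, some `x` satisfies `R x (f x)`, and
`f` is an `R`-restricted `α`-contraction, then `f` has a fixed point; if moreover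
`X` is `R^s`-connected, the fixed point is unique. -/
theorem relation_theoretic_BCP {X : Type*} [MetricSpace X] [CompleteSpace X]
    (R : X → X → Prop) (f : X → X)
    (h1 : ∀ x y : X, R x y → R (f x) (f y))
    (h2 : Continuous f ∨
      (∀ (s : ℕ → X) (x : X), (∀ n, R (s n) (s (n + 1))) →
        Tendsto s atTop (nhds x) →
        ∃ φ : ℕ → ℕ, StrictMono φ ∧ ∀ k, R (s (φ k)) x ∨ R x (s (φ k))))
    (h3 : ∃ x : X, R x (f x))
    (h4 : ∃ α : ℝ, 0 ≤ α ∧ α < 1 ∧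
      ∀ x y : X, R x y → dist (f x) (f y) ≤ α * dist x y) :
    (∃ x : X, f x = x) ∧
    ((∀ x y : X, ∃ (k : ℕ) (z : ℕ → X), z 0 = x ∧ z k = y ∧
        ∀ i < k, (R (z i) (z (i + 1)) ∨ R (z (i + 1)) (z i))) →
      ∃! x : X, f x = x) := by
  obtain ⟨α, hα0, hα1, hα⟩ := h4
  obtain ⟨x₀, hx₀⟩ := h3
  lift α to ℝ≥0 using hα0
  have hf : RelLipschitzWith α R f := hα
  obtain ⟨x, hx⟩ := hf.exists_isFixedPt hα1 h1 h2 hx₀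
  refine ⟨⟨x, hx⟩, fun hconn ↦ ⟨x, hx, fun y hy ↦ ?_⟩⟩
  obtain ⟨k, z, rfl, rfl, hz⟩ := hconn y x
  have hpath : EqvGen R (z 0) (z k) :=
    EqvGen.reflTransGen_symmGen R ▸ reflTransGen_of_forall_lt hz
  exact hf.eq_of_isFixedPt hα1 h1 hpath hy hx
end

section
/- Let (X,d) be a metric space, R a binary relation on X, Y an R-complete subspace of X, and f, g two self-mappings on X. Suppose: (a) f(X) ⊆ g(X) ∩ Y; (b) R is (f,g)-closed; (c) there exists x₀ ∈ X with (g x₀, f x₀) ∈ R; (d) there exists α ∈ [0,1) such that d(f x, f y) ≤ α·d(g x, g y) for all x,y ∈ X with (g x, g y) ∈ R; (e1) f and g are R-compatible; (e2) g is R-continuous; (e3) f is R-continuous. Then f and g have a coincidence point, i.e. there exists z ∈ X with g z = f z. -/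
open Filter

/-!
Since `f(X) ⊆ g(X)`, there is a sequence with `g xₙ₊₁ = f xₙ`. Closedness of `R` propagates the
relation `(g x₀, f x₀) ∈ R` along it, so the contraction makes `(f xₙ)` a geometric Cauchy sequence,
with a limit `z` which is also the limit of its shift `(g xₙ)`. By `R`-continuity `g f xₙ → g z` and
`f g xₙ → f z`, and compatibility forces these two limits to be at distance zero.
-/

open scoped Topology

/-- `R`-preserving sequences: consecutive terms are related by `R`. -/
def RelPreserving {α : Type*} (R : α → α → Prop) (s : ℕ → α) : Prop :=
  ∀ n, R (s n) (s (n + 1))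

/-- `R`-continuity: sequential continuity tested on `R`-preserving sequences only. -/
def RelContinuous {X Z : Type*} [TopologicalSpace X] [TopologicalSpace Z]
    (R : X → X → Prop) (h : X → Z) : Prop :=
  ∀ (s : ℕ → X) (x : X), RelPreserving R s → Tendsto s atTop (𝓝 x) →
    Tendsto (h ∘ s) atTop (𝓝 (h x))

/-- `R`-compatibility: `f` and `g` asymptotically commute along sequences whose images under `f`
and `g` are `R`-preserving and have a common limit. -/
def RelCompatible {X : Type*} [PseudoMetricSpace X] (R : X → X → Prop) (f g : X → X) : Prop :=
  ∀ (s : ℕ → X) (z : X), RelPreserving R (f ∘ s) → RelPreserving R (g ∘ s) →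
    Tendsto (g ∘ s) atTop (𝓝 z) → Tendsto (f ∘ s) atTop (𝓝 z) →
    Tendsto (fun n => dist (g (f (s n))) (f (g (s n)))) atTop (𝓝 0)

/-- Picard–Jungck sequences of the pair `(f, g)`, the analogue for coincidence points of the orbits
of `f`, which are the case `g = id`. -/
def IsPicardJungckSeq {α β : Type*} (f g : α → β) (s : ℕ → α) : Prop :=
  ∀ n, g (s (n + 1)) = f (s n)

theorem exists_isPicardJungckSeq {α β : Type*} {f g : α → β}
    (hfg : Set.range f ⊆ Set.range g) (x₀ : α) :
    ∃ s : ℕ → α, s 0 = x₀ ∧ IsPicardJungckSeq f g s := by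
  choose p hp using fun x => hfg (Set.mem_range_self x)
  refine ⟨fun n => p^[n] x₀, rfl, fun n => ?_⟩
  simp only [Function.iterate_succ_apply', hp]

namespace IsPicardJungckSeq

variable {α β : Type*} {f g : α → β} {s : ℕ → α}

theorem relPreserving_comp_right {R : β → β → Prop} (hs : IsPicardJungckSeq f g s)
    (hclosed : ∀ x y, R (g x) (g y) → R (f x) (f y)) (h0 : R (g (s 0)) (f (s 0))) :
    RelPreserving R (g ∘ s) := by
  intro n
  induction n with
  | zero => simpa only [Function.comp_apply, hs 0] using h0
  | succ n ih => simpa only [Function.comp_apply, hs _] using hclosed _ _ ih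

theorem tendsto_comp_right_iff [TopologicalSpace β] (hs : IsPicardJungckSeq f g s) {z : β} :
    Tendsto (g ∘ s) atTop (𝓝 z) ↔ Tendsto (f ∘ s) atTop (𝓝 z) := by
  rw [← tendsto_add_atTop_iff_nat 1]
  simp only [Function.comp_def, hs _]

theorem dist_le_geometric [PseudoMetricSpace β] (hs : IsPicardJungckSeq f g s) {c : ℝ}
    (hc : 0 ≤ c)
    (hcontr : ∀ n, dist (f (s n)) (f (s (n + 1))) ≤ c * dist (g (s n)) (g (s (n + 1)))) (n : ℕ) :
    dist (f (s n)) (f (s (n + 1))) ≤ dist (f (s 0)) (f (s 1)) * c ^ n := by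
  induction n with
  | zero => simp
  | succ n ih =>
    calc dist (f (s (n + 1))) (f (s (n + 2)))
        ≤ c * dist (f (s n)) (f (s (n + 1))) := by
          simpa only [hs _] using hcontr (n + 1)
      _ ≤ c * (dist (f (s 0)) (f (s 1)) * c ^ n) := by gcongr
      _ = dist (f (s 0)) (f (s 1)) * c ^ (n + 1) := by ring

theorem cauchySeq_comp_left [PseudoMetricSpace β] (hs : IsPicardJungckSeq f g s) {c : ℝ}
    (hc0 : 0 ≤ c) (hc1 : c < 1)
    (hcontr : ∀ n, dist (f (s n)) (f (s (n + 1))) ≤ c * dist (g (s n)) (g (s (n + 1)))) :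
    CauchySeq (f ∘ s) :=
  cauchySeq_of_le_geometric c _ hc1 (hs.dist_le_geometric hc0 hcontr)

end IsPicardJungckSeq

section PseudoMetricSpace

variable {X : Type*} [PseudoMetricSpace X] {R : X → X → Prop} {f g : X → X}

theorem RelCompatible.inseparable_of_tendsto (hfg : RelCompatible R f g)
    (hg : RelContinuous R g) (hf : RelContinuous R f) {s : ℕ → X} {z : X}
    (hRf : RelPreserving R (f ∘ s)) (hRg : RelPreserving R (g ∘ s))
    (hfz : Tendsto (f ∘ s) atTop (𝓝 z)) (hgz : Tendsto (g ∘ s) atTop (𝓝 z)) :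
    Inseparable (g z) (f z) := by
  have hdist : Tendsto (fun n => dist (g (f (s n))) (f (g (s n)))) atTop (𝓝 (dist (g z) (f z))) :=
    (hg _ z hRf hfz).dist (hf _ z hRg hgz)
  exact Metric.inseparable_iff.2 (tendsto_nhds_unique hdist (hfg s z hRf hRg hgz hfz))

theorem coincidence_e_fRcontinuous_general
    (hconv : ∀ s : ℕ → X, RelPreserving R (f ∘ s) → CauchySeq (f ∘ s) →
      ∃ z, Tendsto (f ∘ s) atTop (𝓝 z))
    (hrange : Set.range f ⊆ Set.range g)
    (hclosed : ∀ x y, R (g x) (g y) → R (f x) (f y))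
    (hstart : ∃ x₀, R (g x₀) (f x₀))
    (hcontr : ∃ c : ℝ, 0 ≤ c ∧ c < 1 ∧
      ∀ x y, R (g x) (g y) → dist (f x) (f y) ≤ c * dist (g x) (g y))
    (hcompat : RelCompatible R f g) (hg : RelContinuous R g) (hf : RelContinuous R f) :
    ∃ z, Inseparable (g z) (f z) := by
  obtain ⟨x₀, hx₀⟩ := hstart
  obtain ⟨c, hc0, hc1, hcontr⟩ := hcontr
  obtain ⟨s, rfl, hs⟩ := exists_isPicardJungckSeq hrange x₀
  have hRg : RelPreserving R (g ∘ s) := hs.relPreserving_comp_right hclosed hx₀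
  have hRf : RelPreserving R (f ∘ s) := fun n => hclosed _ _ (hRg n)
  have hcauchy : CauchySeq (f ∘ s) :=
    hs.cauchySeq_comp_left hc0 hc1 fun n => hcontr _ _ (hRg n)
  obtain ⟨z, hfz⟩ := hconv s hRf hcauchy
  exact ⟨z, hcompat.inseparable_of_tendsto hg hf hRf hRg hfz (hs.tendsto_comp_right_iff.2 hfz)⟩

end PseudoMetricSpace

/-- Theorem 2, case (e) with `f` `R`-continuous: existence of a
coincidence point of `f` and `g`. -/
theorem coincidence_e_fRcontinuous {X : Type*} [MetricSpace X]
    (R : X → X → Prop) (Y : Set X) (f g : X → X)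
    (hY : ∀ s : ℕ → X, (∀ n, s n ∈ Y) → (∀ n, R (s n) (s (n + 1))) → CauchySeq s →
      ∃ y ∈ Y, Tendsto s atTop (nhds y))
    (ha : ∀ x : X, f x ∈ Set.range g ∩ Y)
    (hb : ∀ x y : X, R (g x) (g y) → R (f x) (f y))
    (hc : ∃ x₀ : X, R (g x₀) (f x₀))
    (hd : ∃ α : ℝ, 0 ≤ α ∧ α < 1 ∧
      ∀ x y : X, R (g x) (g y) → dist (f x) (f y) ≤ α * dist (g x) (g y))
    (he1 : ∀ (s : ℕ → X) (z : X),
      (∀ n, R (f (s n)) (f (s (n + 1)))) → (∀ n, R (g (s n)) (g (s (n + 1)))) →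
      Tendsto (fun n => g (s n)) atTop (nhds z) →
      Tendsto (fun n => f (s n)) atTop (nhds z) →
      Tendsto (fun n => dist (g (f (s n))) (f (g (s n)))) atTop (nhds 0))
    (he2 : ∀ (s : ℕ → X) (x : X), (∀ n, R (s n) (s (n + 1))) →
      Tendsto s atTop (nhds x) →
      Tendsto (fun n => g (s n)) atTop (nhds (g x)))
    (he3 : ∀ (s : ℕ → X) (x : X), (∀ n, R (s n) (s (n + 1))) →
      Tendsto s atTop (nhds x) →
      Tendsto (fun n => f (s n)) atTop (nhds (f x))) :
    ∃ z : X, g z = f z := by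
  obtain ⟨z, hz⟩ := coincidence_e_fRcontinuous_general
    (fun _ hR hC => (hY _ (fun _ => (ha _).2) hR hC).imp fun _ h => h.2)
    (Set.range_subset_iff.2 fun x => (ha x).1) hb hc hd he1 he2 he3
  exact ⟨z, hz.eq⟩
end

section
/- Let (X,d) be a metric space, R a binary relation on X, Y an R-complete subspace of X, and f, g two self-mappings on X. Suppose: (a) f(X) ⊆ g(X) ∩ Y; (b) R is (f,g)-closed; (c) there exists x₀ ∈ X with (g x₀, f x₀) ∈ R; (d) there exists α ∈ [0,1) such that d(f x, f y) ≤ α·d(g x, g y) for all x,y ∈ X with (g x, g y) ∈ R; (e′1) Y ⊆ g(X); (e′2) the restriction R|_Y is d-self-closed. Then f and g have a coincidence point, i.e. there exists u ∈ X with g u = f u. -/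
open Filter

/-!
Iterate `g xₙ₊₁ = f xₙ`. Along this sequence consecutive terms of `g xₙ` stay `R`-related, so the
contraction makes it Cauchy, with a limit `g u` in `Y`. On a subsequence related to `g u` the
contraction also gives `f xₙ → f u`, while `f xₙ = g xₙ₊₁ → g u`.
-/

open Relation Topology

/-- An `R`-preserving sequence: consecutive terms are related by `R`. -/
def IsRelPreserving {X : Type*} (R : X → X → Prop) (s : ℕ → X) : Prop :=
  ∀ n, R (s n) (s (n + 1))

/-- An `R`-complete subspace: only the `R`-preserving Cauchy sequences in `Y` are required to
converge in `Y`. -/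
def IsRelComplete {X : Type*} [UniformSpace X] (R : X → X → Prop) (Y : Set X) : Prop :=
  ∀ s : ℕ → X, (∀ n, s n ∈ Y) → IsRelPreserving R s → CauchySeq s → ∃ y ∈ Y, Tendsto s atTop (𝓝 y)

/-- The restriction `R|_Y` of a relation to a set, kept as a relation on the ambient type so that
it can be tested against limits outside `Y`. -/
def RelRestrict {X : Type*} (R : X → X → Prop) (Y : Set X) (a b : X) : Prop :=
  R a b ∧ a ∈ Y ∧ b ∈ Y

/-- A `d`-self-closed relation: every convergent `S`-preserving sequence has a subsequence
comparable to its limit, where `SymmGen S a b` is the paper's `[a, b] ∈ S`. -/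
def IsSelfClosed {X : Type*} [TopologicalSpace X] (S : X → X → Prop) : Prop :=
  ∀ (s : ℕ → X) (x : X), IsRelPreserving S s → Tendsto s atTop (𝓝 x) →
    ∃ φ : ℕ → ℕ, StrictMono φ ∧ ∀ k, SymmGen S (s (φ k)) x

/-- The contraction condition of the theorem: `f` contracts by the factor `α`, relative to `g`,
the pairs whose `g`-images are related by `R`. -/
def IsRelContraction {A X : Type*} [PseudoMetricSpace X] (R : X → X → Prop) (f g : A → X)
    (α : ℝ) : Prop :=
  ∀ a b, R (g a) (g b) → dist (f a) (f b) ≤ α * dist (g a) (g b)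

/-- A Picard–Jungck sequence of `f` and `g`. For `g = id` it is the Picard iteration of `f`. -/
def IsPicardJungck {A X : Type*} (f g : A → X) (x : ℕ → A) : Prop :=
  ∀ n, g (x (n + 1)) = f (x n)

section PicardJungck

variable {A X : Type*} {R : X → X → Prop} {f g : A → X} {x : ℕ → A}

theorem exists_isPicardJungck (hfg : ∀ a, f a ∈ Set.range g) (x₀ : A) :
    ∃ x : ℕ → A, x 0 = x₀ ∧ IsPicardJungck f g x := by
  choose next hnext using hfg
  refine ⟨fun n => next^[n] x₀, rfl, fun n => ?_⟩
  simp only [Function.iterate_succ_apply', hnext]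

theorem IsPicardJungck.isRelPreserving (hx : IsPicardJungck f g x)
    (hclosed : ∀ a b, R (g a) (g b) → R (f a) (f b)) (h₀ : R (g (x 0)) (f (x 0))) :
    IsRelPreserving R (g ∘ x) := by
  intro n
  induction n with
  | zero => simpa only [Function.comp_apply, hx 0] using h₀
  | succ n ih => simpa only [Function.comp_apply, hx n, hx (n + 1)] using hclosed _ _ ih

end PicardJungck

theorem cauchySeq_of_dist_succ_le_mul {X : Type*} [PseudoMetricSpace X] {s : ℕ → X} {α : ℝ}
    (hα₀ : 0 ≤ α) (hα₁ : α < 1)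
    (hs : ∀ n, dist (s (n + 1)) (s (n + 2)) ≤ α * dist (s n) (s (n + 1))) : CauchySeq s := by
  refine cauchySeq_of_le_geometric α (dist (s 0) (s 1)) hα₁ fun n => ?_
  rw [mul_comm]
  exact le_geom (u := fun k => dist (s k) (s (k + 1))) hα₀ n fun k _ => hs k

section Contraction

variable {A X : Type*} [PseudoMetricSpace X] {R : X → X → Prop} {f g : A → X} {α : ℝ}

theorem IsRelContraction.symmGen (hf : IsRelContraction R f g α) :
    IsRelContraction (SymmGen R) f g α := by
  rintro a b (hab | hba)
  · exact hf a b hab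
  · simpa only [dist_comm] using hf b a hba

theorem IsRelContraction.tendsto (hf : IsRelContraction R f g α) {ι : Type*} {l : Filter ι}
    {z : ι → A} {u : A} (hz : Tendsto (g ∘ z) l (𝓝 (g u)))
    (hR : ∀ᶠ i in l, R (g (z i)) (g u)) : Tendsto (f ∘ z) l (𝓝 (f u)) := by
  rw [tendsto_iff_dist_tendsto_zero] at hz ⊢
  have hbound : ∀ᶠ i in l, dist (f (z i)) (f u) ≤ α * dist (g (z i)) (g u) :=
    hR.mono fun i hi => hf (z i) u hi
  exact squeeze_zero' (.of_forall fun _ => dist_nonneg) hbound (by simpa using hz.const_mul α)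

theorem IsRelContraction.cauchySeq (hf : IsRelContraction R f g α) (hα₀ : 0 ≤ α) (hα₁ : α < 1)
    {x : ℕ → A} (hx : IsPicardJungck f g x) (hR : IsRelPreserving R (g ∘ x)) :
    CauchySeq (g ∘ x) := by
  refine cauchySeq_of_dist_succ_le_mul hα₀ hα₁ fun n => ?_
  simpa only [Function.comp_apply, hx n, hx (n + 1)] using hf _ _ (hR n)

theorem IsRelContraction.inseparable_of_tendsto (hf : IsRelContraction R f g α) {x : ℕ → A}
    (hx : IsPicardJungck f g x) {u : A} (hu : Tendsto (g ∘ x) atTop (𝓝 (g u))) {φ : ℕ → ℕ}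
    (hφ : Tendsto φ atTop atTop) (hR : ∀ k, SymmGen R (g (x (φ k))) (g u)) :
    Inseparable (g u) (f u) := by
  have hsucc : g ∘ x ∘ (· + 1) ∘ φ = f ∘ x ∘ φ := funext fun k => hx (φ k)
  have hg : Tendsto (f ∘ x ∘ φ) atTop (𝓝 (g u)) :=
    hsucc ▸ hu.comp ((tendsto_add_atTop_nat 1).comp hφ)
  have hf' : Tendsto (f ∘ x ∘ φ) atTop (𝓝 (f u)) :=
    hf.symmGen.tendsto (hu.comp hφ) (.of_forall hR)
  exact tendsto_nhds_unique_inseparable hg hf'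

end Contraction

theorem coincidence_e'_restrictionSelfClosed_general {A X : Type*} [PseudoMetricSpace X]
    {R : X → X → Prop} {Y : Set X} {f g : A → X} {α : ℝ} (hY : IsRelComplete R Y)
    (hfY : ∀ a, f a ∈ Y) (hYg : Y ⊆ Set.range g)
    (hclosed : ∀ a b, R (g a) (g b) → R (f a) (f b)) (hstart : ∃ a, R (g a) (f a))
    (hα₀ : 0 ≤ α) (hα₁ : α < 1) (hf : IsRelContraction R f g α)
    (hself : IsSelfClosed (RelRestrict R Y)) : ∃ u, Inseparable (g u) (f u) := by
  obtain ⟨a, ha⟩ := hstart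
  obtain ⟨x₀, hx₀⟩ := hYg (hfY a)
  -- Starting one step late, at `g x₀ = f a`, puts all of `g ∘ x` inside `Y`.
  have hstart' : R (g x₀) (f x₀) := hx₀ ▸ hclosed a x₀ (hx₀ ▸ ha)
  obtain ⟨x, rfl, hx⟩ := exists_isPicardJungck (fun b => hYg (hfY b)) x₀
  have hxY : ∀ n, g (x n) ∈ Y
    | 0 => hx₀ ▸ hfY a
    | n + 1 => hx n ▸ hfY (x n)
  have hR : IsRelPreserving R (g ∘ x) := hx.isRelPreserving hclosed hstart'
  obtain ⟨y, hyY, hy⟩ := hY _ hxY hR (hf.cauchySeq hα₀ hα₁ hx hR)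
  obtain ⟨u, rfl⟩ := hYg hyY
  obtain ⟨φ, hφ, hφR⟩ := hself _ _ (fun n => ⟨hR n, hxY n, hxY (n + 1)⟩) hy
  exact ⟨u, hf.inseparable_of_tendsto hx hy hφ.tendsto_atTop fun k => (hφR k).imp And.left And.left⟩

/-- Theorem 2, case (e′) with `R|_Y` `d`-self-closed: existence of a
coincidence point of `f` and `g`. Here `R|_Y x y` means `R x y ∧ x ∈ Y ∧ y ∈ Y`. -/
theorem coincidence_e'_restrictionSelfClosed {X : Type*} [MetricSpace X]
    (R : X → X → Prop) (Y : Set X) (f g : X → X)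
    (hY : ∀ s : ℕ → X, (∀ n, s n ∈ Y) → (∀ n, R (s n) (s (n + 1))) → CauchySeq s →
      ∃ y ∈ Y, Tendsto s atTop (nhds y))
    (ha : ∀ x : X, f x ∈ Set.range g ∩ Y)
    (hb : ∀ x y : X, R (g x) (g y) → R (f x) (f y))
    (hc : ∃ x₀ : X, R (g x₀) (f x₀))
    (hd : ∃ α : ℝ, 0 ≤ α ∧ α < 1 ∧
      ∀ x y : X, R (g x) (g y) → dist (f x) (f y) ≤ α * dist (g x) (g y))
    (he'1 : Y ⊆ Set.range g)
    (he'2 : ∀ (s : ℕ → X) (x : X),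
      (∀ n, R (s n) (s (n + 1)) ∧ s n ∈ Y ∧ s (n + 1) ∈ Y) →
      Tendsto s atTop (nhds x) →
      ∃ φ : ℕ → ℕ, StrictMono φ ∧
        ∀ k, (R (s (φ k)) x ∧ s (φ k) ∈ Y ∧ x ∈ Y) ∨
             (R x (s (φ k)) ∧ x ∈ Y ∧ s (φ k) ∈ Y)) :
    ∃ u : X, g u = f u := by
  obtain ⟨_, hα₀, hα₁, hf⟩ := hd
  exact (coincidence_e'_restrictionSelfClosed_general hY (fun x => (ha x).2) he'1 hb hc hα₀ hα₁ hf
    he'2).imp fun _ hu => hu.eq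
end

section
/- Let (X,d) be a metric space, R a binary relation on X, and f, g two self-mappings on X. Suppose: (a) f(X) ⊆ g(X); (b) R is (f,g)-closed; (d) there exists α ∈ [0,1) such that d(f x, f y) ≤ α·d(g x, g y) for all x,y ∈ X with (g x, g y) ∈ R; and (u₁′) R|_{f(X)} is complete, i.e. [u,v] ∈ R for all u, v ∈ f(X). Then any two points of coincidence of f and g are equal: if x̄ = g x = f x and ȳ = g y = f y for some x, y ∈ X, then x̄ = ȳ. -/
/-- A point of coincidence of `f` and `g`: a common value of the two maps at a single argument,
i.e. the value itself rather than the argument where it is attained. -/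
def IsPointOfCoincidence {ι X : Type*} (f g : ι → X) (p : X) : Prop :=
  ∃ x, g x = p ∧ f x = p

section

variable {ι X : Type*} {R : X → X → Prop} {f g : ι → X} {p q : X}

theorem IsPointOfCoincidence.mem_range_left (hp : IsPointOfCoincidence f g p) :
    p ∈ Set.range f :=
  let ⟨x, _, hfx⟩ := hp
  ⟨x, hfx⟩

theorem IsPointOfCoincidence.eq_of_rel [Dist X]
    (hp : IsPointOfCoincidence f g p) (hq : IsPointOfCoincidence f g q)
    (hcontr : ∀ x y, R (g x) (g y) → g x ≠ g y → dist (f x) (f y) < dist (g x) (g y))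
    (hpq : R p q) : p = q := by
  obtain ⟨x, rfl, hfx⟩ := hp
  obtain ⟨y, rfl, hfy⟩ := hq
  by_contra hne
  have hlt : dist (f x) (f y) < dist (g x) (g y) := hcontr x y hpq hne
  rw [hfx, hfy] at hlt
  exact hlt.false

theorem unique_point_of_coincidence_complete_restriction_general [Dist X]
    (hcontr : ∀ x y, R (g x) (g y) → g x ≠ g y → dist (f x) (f y) < dist (g x) (g y))
    (hcomplete : (Set.range f).Pairwise fun u v ↦ R u v ∨ R v u) :
    {p | IsPointOfCoincidence f g p}.Subsingleton := by
  intro p hp q hq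
  by_contra hne
  rcases hcomplete hp.mem_range_left hq.mem_range_left hne with hpq | hqp
  · exact hne (hp.eq_of_rel hq hcontr hpq)
  · exact hne (hq.eq_of_rel hp hcontr hqp).symm

end

theorem dist_lt_dist_of_le_mul {X Y : Type*} [Dist Y] [MetricSpace X] {α : ℝ} (hα : α < 1)
    {a b : Y} {u v : X} (h : dist a b ≤ α * dist u v) (huv : u ≠ v) : dist a b < dist u v :=
  h.trans_lt (mul_lt_of_lt_one_left (dist_pos.2 huv) hα)

/-- Corollary 3, condition (u₁′): under (a), (b), (d) and
completeness of `R|_{f(X)}`, any two points of coincidence of `f` and `g` are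
equal. -/
theorem unique_point_of_coincidence_complete_restriction {X : Type*} [MetricSpace X]
    (R : X → X → Prop) (f g : X → X)
    (ha : ∀ x : X, f x ∈ Set.range g)
    (hb : ∀ x y : X, R (g x) (g y) → R (f x) (f y))
    (hd : ∃ α : ℝ, 0 ≤ α ∧ α < 1 ∧
      ∀ x y : X, R (g x) (g y) → dist (f x) (f y) ≤ α * dist (g x) (g y))
    (hu1' : ∀ u ∈ Set.range f, ∀ v ∈ Set.range f, R u v ∨ R v u) :
    ∀ x y xb yb : X, xb = g x → xb = f x → yb = g y → yb = f y → xb = yb := by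
  intro x y xb yb hxg hxf hyg hyf
  obtain ⟨α, -, hα, hd⟩ := hd
  exact unique_point_of_coincidence_complete_restriction_general
    (fun x y hR ↦ dist_lt_dist_of_le_mul hα (hd x y hR))
    (fun u hu v hv _ ↦ hu1' u hu v hv) ⟨x, hxg.symm, hxf.symm⟩ ⟨y, hyg.symm, hyf.symm⟩
end

section
/- Let (X,d) be a metric space, R a binary relation on X, and f, g two self-mappings on X. Suppose: (a) f(X) ⊆ g(X); (b) R is (f,g)-closed; (d) there exists α ∈ [0,1) such that d(f x, f y) ≤ α·d(g x, g y) for all x,y ∈ X with (g x, g y) ∈ R; (u₁) f(X) is (R|_{g(X)})^s-connected, i.e. for every pair of points u, v ∈ f(X) there is a path in (R|_{g(X)})^s from u to v; and (u₂) at least one of f and g is injective. Then any two coincidence points of f and g are equal: if g x = f x and g y = f y, then x = y. -/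
/-!
Since `f(X) ⊆ g(X)`, a section `σ` of `g` over its range turns the pair `(f, g)` into the self-map
`T = f ∘ σ` of `g(X)`, which preserves `R` there and contracts `R`-related pairs. If `u` and `v` are
joined by a path in the symmetric closure of `R` on `g(X)`, then each edge of the path shrinks
geometrically under iteration, so `dist (Tⁿ u) (Tⁿ v) → 0`. If the values
`g x = f x` and `g y = f y` were distinct, `σ` could be chosen to pass through both `x` and `y`,
making them distinct fixed points of `T` at a distance tending to `0`.
-/

open Filter Function Relation Set
open scoped Topology

section ContractionAlongRelation

variable {X : Type*} {r : X → X → Prop} {T : X → X} {u v : X}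

theorem rel_iterate_s15 (hT : ∀ u v, r u v → r (T u) (T v)) (huv : r u v) (n : ℕ) :
    r (T^[n] u) (T^[n] v) := by
  induction n with
  | zero => exact huv
  | succ n ih => simpa only [iterate_succ_apply'] using hT _ _ ih

theorem dist_iterate_le_of_rel [PseudoMetricSpace X] {K : ℝ} (hK : 0 ≤ K)
    (hT : ∀ u v, r u v → r (T u) (T v)) (hd : ∀ u v, r u v → dist (T u) (T v) ≤ K * dist u v)
    (huv : r u v) (n : ℕ) : dist (T^[n] u) (T^[n] v) ≤ K ^ n * dist u v := by
  induction n with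
  | zero => simp
  | succ n ih =>
    rw [iterate_succ_apply', iterate_succ_apply']
    calc dist (T (T^[n] u)) (T (T^[n] v))
        ≤ K * dist (T^[n] u) (T^[n] v) := hd _ _ (rel_iterate_s15 hT huv n)
      _ ≤ K * (K ^ n * dist u v) := by gcongr
      _ = K ^ (n + 1) * dist u v := by ring

theorem tendsto_dist_iterate_of_eqvGen [PseudoMetricSpace X] {K : ℝ} (hK₀ : 0 ≤ K) (hK₁ : K < 1)
    (hT : ∀ u v, r u v → r (T u) (T v)) (hd : ∀ u v, r u v → dist (T u) (T v) ≤ K * dist u v)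
    (huv : EqvGen r u v) : Tendsto (fun n ↦ dist (T^[n] u) (T^[n] v)) atTop (𝓝 0) := by
  induction huv with
  | rel u v huv =>
    have hgeom : Tendsto (fun n ↦ K ^ n * dist u v) atTop (𝓝 0) := by
      simpa using (tendsto_pow_atTop_nhds_zero_of_lt_one hK₀ hK₁).mul_const (dist u v)
    exact squeeze_zero (fun _ ↦ dist_nonneg) (dist_iterate_le_of_rel hK₀ hT hd huv) hgeom
  | refl u => simp
  | symm u v _ ih => simpa only [dist_comm] using ih
  | trans u v w _ _ ihuv ihvw =>
    exact squeeze_zero (fun _ ↦ dist_nonneg) (fun _ ↦ dist_triangle _ _ _)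
      (by simpa using ihuv.add ihvw)

theorem eq_of_isFixedPt_of_eqvGen [MetricSpace X] {K : ℝ} (hK₀ : 0 ≤ K) (hK₁ : K < 1)
    (hT : ∀ u v, r u v → r (T u) (T v)) (hd : ∀ u v, r u v → dist (T u) (T v) ≤ K * dist u v)
    (hu : IsFixedPt T u) (hv : IsFixedPt T v) (huv : EqvGen r u v) : u = v := by
  have hlim := tendsto_dist_iterate_of_eqvGen hK₀ hK₁ hT hd huv
  simp only [(hu.iterate _).eq, (hv.iterate _).eq] at hlim
  exact dist_eq_zero.1 (tendsto_nhds_unique tendsto_const_nhds hlim)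

end ContractionAlongRelation

theorem exists_rightInvOn_range_leftInvOn {A X : Type*} [Nonempty A] {g : A → X} {s : Set A}
    (hg : InjOn g s) : ∃ σ : X → A, RightInvOn σ g (range g) ∧ LeftInvOn σ g s := by
  obtain ⟨t, hst, ht⟩ := hg.bijOn_image.exists_extend (image_subset_range g s) subset_rfl
  exact ⟨invFunOn g t, ht.invOn_invFunOn.2, ht.invOn_invFunOn.1.mono hst⟩

/-- The restriction `R|_E` of a relation to a subset, kept as a relation on the whole type so that
self-maps of `X` need not be restricted to `E`. Its generated equivalence `EqvGen` relates distinct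
points exactly when a path in the symmetric closure of `R|_E` joins them. -/
def restrictRel {X : Type*} (R : X → X → Prop) (E : Set X) (u v : X) : Prop :=
  R u v ∧ u ∈ E ∧ v ∈ E

theorem eqvGen_restrictRel_of_exists_path {X : Type*} {R : X → X → Prop} {E : Set X} {u v : X}
    (huv : ∃ (k : ℕ) (z : ℕ → X), z 0 = u ∧ z k = v ∧
      ∀ i < k, (R (z i) (z (i + 1)) ∨ R (z (i + 1)) (z i)) ∧ z i ∈ E ∧ z (i + 1) ∈ E) :
    EqvGen (restrictRel R E) u v := by
  obtain ⟨k, z, rfl, rfl, hz⟩ := huv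
  induction k with
  | zero => exact .refl _
  | succ k ih =>
    obtain ⟨hstep, hk, hk'⟩ := hz k k.lt_succ_self
    refine .trans _ _ _ (ih fun i hi ↦ hz i (hi.trans k.lt_succ_self)) ?_
    rcases hstep with h | h
    · exact .rel _ _ ⟨h, hk, hk'⟩
    · exact .symm _ _ (.rel _ _ ⟨h, hk', hk⟩)

section Coincidence

variable {A X : Type*} {R : X → X → Prop} {f g : A → X}

theorem restrictRel_comp_rightInvOn {σ : X → A} (hfg : range f ⊆ range g)
    (hR : ∀ a b, R (g a) (g b) → R (f a) (f b)) (hσ : RightInvOn σ g (range g)) (u v : X)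
    (huv : restrictRel R (range g) u v) : restrictRel R (range g) ((f ∘ σ) u) ((f ∘ σ) v) := by
  obtain ⟨hr, hu, hv⟩ := huv
  exact ⟨hR _ _ (by rwa [hσ hu, hσ hv]), hfg (mem_range_self _), hfg (mem_range_self _)⟩

theorem dist_comp_rightInvOn_le [PseudoMetricSpace X] {K : ℝ} {σ : X → A}
    (hd : ∀ a b, R (g a) (g b) → dist (f a) (f b) ≤ K * dist (g a) (g b))
    (hσ : RightInvOn σ g (range g)) (u v : X) (huv : restrictRel R (range g) u v) :
    dist ((f ∘ σ) u) ((f ∘ σ) v) ≤ K * dist u v := by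
  obtain ⟨hr, hu, hv⟩ := huv
  simpa only [comp_apply, hσ hu, hσ hv] using hd (σ u) (σ v) (by rwa [hσ hu, hσ hv])

theorem coincidence_value_unique [MetricSpace X] {K : ℝ} (hK₀ : 0 ≤ K) (hK₁ : K < 1)
    (hfg : range f ⊆ range g) (hR : ∀ a b, R (g a) (g b) → R (f a) (f b))
    (hd : ∀ a b, R (g a) (g b) → dist (f a) (f b) ≤ K * dist (g a) (g b))
    {x y : A} (hx : g x = f x) (hy : g y = f y)
    (hxy : EqvGen (restrictRel R (range g)) (f x) (f y)) : f x = f y := by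
  by_contra hne
  have hinj : InjOn g {x, y} := injOn_pair.2 fun h ↦ absurd (by rwa [← hx, ← hy]) hne
  have : Nonempty A := ⟨x⟩
  obtain ⟨σ, hσ, hσxy⟩ := exists_rightInvOn_range_leftInvOn hinj
  have isFixedPt_of_mem : ∀ a ∈ ({x, y} : Set A), g a = f a → IsFixedPt (f ∘ σ) (f a) :=
    fun a ha hga ↦ by rw [IsFixedPt, comp_apply, ← hga, hσxy ha, hga]
  exact hne <| eq_of_isFixedPt_of_eqvGen hK₀ hK₁ (restrictRel_comp_rightInvOn hfg hR hσ)
    (dist_comp_rightInvOn_le hd hσ) (isFixedPt_of_mem x (by simp) hx)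
    (isFixedPt_of_mem y (by simp) hy) hxy

theorem unique_coincidence_point_general [MetricSpace X] {K : ℝ} (hK₀ : 0 ≤ K) (hK₁ : K < 1)
    (hfg : range f ⊆ range g) (hR : ∀ a b, R (g a) (g b) → R (f a) (f b))
    (hd : ∀ a b, R (g a) (g b) → dist (f a) (f b) ≤ K * dist (g a) (g b))
    (hinj : Injective f ∨ Injective g) {x y : A} (hx : g x = f x) (hy : g y = f y)
    (hxy : EqvGen (restrictRel R (range g)) (f x) (f y)) : x = y := by
  have hf : f x = f y := coincidence_value_unique hK₀ hK₁ hfg hR hd hx hy hxy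
  exact hinj.elim (fun h ↦ h hf) fun h ↦ h (by rw [hx, hy, hf])

end Coincidence

/-- Theorem 4: under (a), (b), (d), (u₁) and injectivity of `f` or
`g`, any two coincidence points of `f` and `g` are equal. -/
theorem unique_coincidence_point {X : Type*} [MetricSpace X]
    (R : X → X → Prop) (f g : X → X)
    (ha : ∀ x : X, f x ∈ Set.range g)
    (hb : ∀ x y : X, R (g x) (g y) → R (f x) (f y))
    (hd : ∃ α : ℝ, 0 ≤ α ∧ α < 1 ∧
      ∀ x y : X, R (g x) (g y) → dist (f x) (f y) ≤ α * dist (g x) (g y))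
    (hu1 : ∀ u ∈ Set.range f, ∀ v ∈ Set.range f,
      ∃ (k : ℕ) (z : ℕ → X), z 0 = u ∧ z k = v ∧
        ∀ i < k, (R (z i) (z (i + 1)) ∨ R (z (i + 1)) (z i)) ∧
          z i ∈ Set.range g ∧ z (i + 1) ∈ Set.range g)
    (hu2 : Function.Injective f ∨ Function.Injective g) :
    ∀ x y : X, g x = f x → g y = f y → x = y := by
  obtain ⟨α, hα₀, hα₁, hα⟩ := hd
  exact fun x y hx hy ↦
    unique_coincidence_point_general hα₀ hα₁ (range_subset_iff.2 ha) hb hα hu2 hx hy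
      (eqvGen_restrictRel_of_exists_path (hu1 _ (mem_range_self x) _ (mem_range_self y)))
end

section
/- Let (X,d) be a metric space, R a binary relation on X, and f, g two self-mappings on X. Suppose: (a) f(X) ⊆ g(X); (b) R is (f,g)-closed; (d) there exists α ∈ [0,1) such that d(f x, f y) ≤ α·d(g x, g y) for all x,y ∈ X with (g x, g y) ∈ R; (u₁) f(X) is (R|_{g(X)})^s-connected, i.e. for every pair of points u, v ∈ f(X) there is a path in (R|_{g(X)})^s from u to v; (e′3) f and g are weakly compatible; and f and g have at least one coincidence point. Then f and g have a unique common fixed point: there exists a unique x̄ ∈ X with x̄ = g x̄ = f x̄. -/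
/-!
The sequences `u` with `g (u (n + 1)) = f (u n)` play the role of Picard iterates. If `g (u 0)` and
`g (v 0)` are `R`-related, then so are all `g (u n)` and `g (v n)`, and their distance is at most
`α ^ n` times the initial one. By the triangle inequality the distance still tends to zero when
`g (u 0)` and `g (v 0)` are joined by a path in the range of `g`. Since the constant sequence at a
coincidence point is such an iteration, all coincidence points have the same value, and weak
compatibility makes that value a coincidence point as well.
-/

open Filter Function Relation Set Topology

section Relation

variable {α : Type*} {r : α → α → Prop}

theorem reflTransGen_of_path {z : ℕ → α} {k : ℕ} (hz : ∀ i < k, r (z i) (z (i + 1))) :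
    ReflTransGen r (z 0) (z k) :=
  (reflTransGen_of_succ_of_le (r on z) (fun i hi ↦ hz i hi.2) k.zero_le).lift z fun _ _ ↦ id

end Relation

section Coincidence

variable {X : Type*} {f g : X → X}

theorem existsUnique_common_fixedPoint_of_coincidence {x : X} (hx : g x = f x)
    (hcomm : g (f x) = f (g x)) (hvalue : ∀ y, g y = f y → g y = g x) :
    ∃! p, p = g p ∧ p = f p := by
  have hgx : g (g x) = f (g x) := (congrArg g hx).trans hcomm
  have hfix : g x = g (g x) := (hvalue (g x) hgx).symm
  refine ⟨g x, ⟨hfix, hfix.trans hgx⟩, fun p ⟨hpg, hpf⟩ ↦ ?_⟩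
  exact hpg.trans (hvalue p (hpg.symm.trans hpf))

end Coincidence

/-- `f` is a contraction relative to `g` along `R`: the relation is `(f, g)`-closed and `f`
contracts `g`-distances by `α` wherever the `g`-values are related. The bounds `0 ≤ α` and `α < 1`
are not part of the structure. -/
structure IsRelContraction_s16 {X Y : Type*} [PseudoMetricSpace Y] (f g : X → Y) (R : Y → Y → Prop)
    (α : ℝ) : Prop where
  map_rel : ∀ x y, R (g x) (g y) → R (f x) (f y)
  dist_le : ∀ x y, R (g x) (g y) → dist (f x) (f y) ≤ α * dist (g x) (g y)

theorem IsRelContraction_s16.symmGen {X Y : Type*} [PseudoMetricSpace Y] {f g : X → Y}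
    {R : Y → Y → Prop} {α : ℝ} (hf : IsRelContraction_s16 f g R α) :
    IsRelContraction_s16 f g (SymmGen R) α where
  map_rel x y := Or.imp (hf.map_rel x y) (hf.map_rel y x)
  dist_le x y := by
    rintro (h | h)
    · exact hf.dist_le x y h
    · simpa only [dist_comm] using hf.dist_le y x h

/-- `u` is a Picard–Jungck sequence of the pair `(f, g)`: each term solves
`g (u (n + 1)) = f (u n)`, which is Picard iteration of `f` when `g` is the identity. -/
def IsJungckSequence {X Y : Type*} (f g : X → Y) (u : ℕ → X) : Prop :=
  ∀ n, g (u (n + 1)) = f (u n)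

namespace IsJungckSequence

section Basic

variable {X Y : Type*} {f g : X → Y}

theorem const {x : X} (hx : g x = f x) : IsJungckSequence f g fun _ ↦ x :=
  fun _ ↦ hx

theorem exists_of_forall_mem_range (hfg : ∀ x, f x ∈ range g) (x : X) :
    ∃ u, u 0 = x ∧ IsJungckSequence f g u := by
  choose T hT using hfg
  exact ⟨fun n ↦ T^[n] x, rfl, fun n ↦ by simp only [iterate_succ_apply', hT]⟩

theorem rel {R : Y → Y → Prop} {u v : ℕ → X} (hu : IsJungckSequence f g u)
    (hv : IsJungckSequence f g v) (hR : ∀ x y, R (g x) (g y) → R (f x) (f y))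
    (h₀ : R (g (u 0)) (g (v 0))) (n : ℕ) : R (g (u n)) (g (v n)) := by
  induction n with
  | zero => exact h₀
  | succ n ih =>
    rw [hu n, hv n]
    exact hR _ _ ih

end Basic

section Contraction

variable {X Y : Type*} [PseudoMetricSpace Y] {f g : X → Y} {R : Y → Y → Prop} {u v : ℕ → X} {α : ℝ}

theorem dist_le_pow_mul (hu : IsJungckSequence f g u) (hv : IsJungckSequence f g v)
    (hf : IsRelContraction_s16 f g R α) (hα₀ : 0 ≤ α) (h₀ : R (g (u 0)) (g (v 0))) (n : ℕ) :
    dist (g (u n)) (g (v n)) ≤ α ^ n * dist (g (u 0)) (g (v 0)) := by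
  refine le_geom (u := fun n ↦ dist (g (u n)) (g (v n))) hα₀ n fun k _ ↦ ?_
  rw [hu k, hv k]
  exact hf.dist_le _ _ (hu.rel hv hf.map_rel h₀ k)

theorem tendsto_dist_of_rel (hu : IsJungckSequence f g u) (hv : IsJungckSequence f g v)
    (hf : IsRelContraction_s16 f g R α) (hα₀ : 0 ≤ α) (hα₁ : α < 1) (h₀ : R (g (u 0)) (g (v 0))) :
    Tendsto (fun n ↦ dist (g (u n)) (g (v n))) atTop (𝓝 0) := by
  refine squeeze_zero (fun _ ↦ dist_nonneg) (hu.dist_le_pow_mul hv hf hα₀ h₀) ?_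
  simpa only [zero_mul] using (tendsto_pow_atTop_nhds_zero_of_lt_one hα₀ hα₁).mul_const _

-- The path must have positive length: `g (u 0) = g (v 0)` does not force `f (u 0) = f (v 0)`.
theorem tendsto_dist_of_transGen (hu : IsJungckSequence f g u) (hv : IsJungckSequence f g v)
    (hfg : ∀ x, f x ∈ range g) (hf : IsRelContraction_s16 f g R α) (hα₀ : 0 ≤ α) (hα₁ : α < 1)
    (hpath : TransGen (fun a b ↦ R a b ∧ a ∈ range g) (g (u 0)) (g (v 0))) :
    Tendsto (fun n ↦ dist (g (u n)) (g (v n))) atTop (𝓝 0) := by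
  generalize hb : g (v 0) = b at hpath
  induction hpath generalizing v with
  | single hstep =>
    subst hb
    exact hu.tendsto_dist_of_rel hv hf hα₀ hα₁ hstep.1
  | tail _ hstep ih =>
    subst hb
    obtain ⟨hxv, x, rfl⟩ := hstep
    obtain ⟨w, rfl, hw⟩ := exists_of_forall_mem_range hfg x
    have huw := ih hw rfl
    have hwv := hw.tendsto_dist_of_rel hv hf hα₀ hα₁ hxv
    refine squeeze_zero (fun _ ↦ dist_nonneg) (fun n ↦ dist_triangle _ (g (w n)) _) ?_
    simpa only [add_zero] using huw.add hwv

end Contraction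

end IsJungckSequence

theorem IsRelContraction_s16.eq_of_coincidence_of_reflTransGen {X Y : Type*} [MetricSpace Y]
    {f g : X → Y} {R : Y → Y → Prop} {α : ℝ} {x y : X} (hf : IsRelContraction_s16 f g R α)
    (hα₀ : 0 ≤ α) (hα₁ : α < 1) (hfg : ∀ x, f x ∈ range g) (hx : g x = f x) (hy : g y = f y)
    (hpath : ReflTransGen (fun a b ↦ R a b ∧ a ∈ range g) (g x) (g y)) : g x = g y := by
  rcases reflTransGen_iff_eq_or_transGen.mp hpath with heq | htrans
  · exact heq.symm
  · have hlim := (IsJungckSequence.const hx).tendsto_dist_of_transGen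
      (IsJungckSequence.const hy) hfg hf hα₀ hα₁ htrans
    exact dist_eq_zero.mp (tendsto_nhds_unique tendsto_const_nhds hlim)

/-- Theorem 5: under (a), (b), (d), (u₁), weak compatibility of
`f` and `g`, and existence of a coincidence point, `f` and `g` have a unique
common fixed point. -/
theorem unique_common_fixed_point {X : Type*} [MetricSpace X]
    (R : X → X → Prop) (f g : X → X)
    (ha : ∀ x : X, f x ∈ Set.range g)
    (hb : ∀ x y : X, R (g x) (g y) → R (f x) (f y))
    (hd : ∃ α : ℝ, 0 ≤ α ∧ α < 1 ∧
      ∀ x y : X, R (g x) (g y) → dist (f x) (f y) ≤ α * dist (g x) (g y))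
    (hu1 : ∀ u ∈ Set.range f, ∀ v ∈ Set.range f,
      ∃ (k : ℕ) (z : ℕ → X), z 0 = u ∧ z k = v ∧
        ∀ i < k, (R (z i) (z (i + 1)) ∨ R (z (i + 1)) (z i)) ∧
          z i ∈ Set.range g ∧ z (i + 1) ∈ Set.range g)
    (he'3 : ∀ x : X, g x = f x → g (f x) = f (g x))
    (hcoin : ∃ x : X, g x = f x) :
    ∃! xb : X, xb = g xb ∧ xb = f xb := by
  obtain ⟨α, hα₀, hα₁, hα⟩ := hd
  obtain ⟨x, hx⟩ := hcoin
  have hf : IsRelContraction_s16 f g (SymmGen R) α := IsRelContraction_s16.symmGen ⟨hb, hα⟩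
  refine existsUnique_common_fixedPoint_of_coincidence hx (he'3 x hx) fun y hy ↦ ?_
  obtain ⟨k, z, hz₀, hzk, hz⟩ := hu1 (f y) ⟨y, rfl⟩ (f x) ⟨x, rfl⟩
  have hpath : ReflTransGen (fun a b ↦ SymmGen R a b ∧ a ∈ range g) (g y) (g x) := by
    rw [hx, hy, ← hz₀, ← hzk]
    exact reflTransGen_of_path fun i hi ↦ ⟨(hz i hi).1, (hz i hi).2.1⟩
  exact hf.eq_of_coincidence_of_reflTransGen hα₀ hα₁ ha hy hx hpath
end
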